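/- arXiv:1909.06425 — 2 statements merged into one kernel-verified Lean document; each statement's English description precedes it below -/
import Mathlib

section
/- Let A be a real n×n matrix, B a real n×m matrix, G^d a real n×p matrix, T a real n×k matrix and M a real m×k matrix such that the horizontal concatenation [A T + B M , G^d] equals [0_{n×p} , T]. Then for every b ∈ ℝᵏ with ‖b‖_∞ ≤ 1, setting x = T b and u = M b, we have A x + B u + d ∈ Z(0,T) for every d ∈ Z(0,G^d). -/
/-! The two column partitions of the same `n × (k + p)` matrix `W = [A T + B M, Gᵈ] = [0, T]` are
played against each other. If `d = Gᵈ e`, then `A x + B u + d = W (b, e)`, where the stacked vector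
`(b, e)` has sup norm at most `1`. Reading `W` as `[0, T]`, this product is `T` applied to the last
`k` entries of `(b, e)`, which again form a vector of sup norm at most `1`. -/

/-- The zonotope `Z(c,H) = {c + H b : b, ‖b‖_∞ ≤ 1}` (sup norm on `ι → ℝ`). -/
def zono {n : ℕ} {ι : Type*} [Fintype ι] (c : Fin n → ℝ) (H : Matrix (Fin n) ι ℝ) :
    Set (Fin n → ℝ) :=
  {x | ∃ b : ι → ℝ, ‖b‖ ≤ 1 ∧ x = c + H.mulVec b}

/-- Horizontal concatenation of two matrices with `Fin`-indexed columns. -/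
def hcat {n k p : ℕ} {R : Type*} (A : Matrix (Fin n) (Fin k) R) (B : Matrix (Fin n) (Fin p) R) :
    Matrix (Fin n) (Fin (k + p)) R :=
  Matrix.of fun i => Fin.append (A i) (B i)

/-- Horizontal concatenation of two matrices with arbitrary column index types. -/
def scat {n : ℕ} {α β : Type*} {R : Type*} (A : Matrix (Fin n) α R) (B : Matrix (Fin n) β R) :
    Matrix (Fin n) (α ⊕ β) R :=
  Matrix.of fun i => Sum.elim (A i) (B i)

/-- Minkowski sum of two sets. -/
def minkSum {α : Type*} [Add α] (A B : Set α) : Set α :=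
  {x | ∃ a ∈ A, ∃ b ∈ B, x = a + b}

/-- A concatenation acts on a vector `v` blockwise: `[A, B] v = A v₁ + B v₂`. -/
theorem hcat_mulVec {n k p : ℕ} (A : Matrix (Fin n) (Fin k) ℝ) (B : Matrix (Fin n) (Fin p) ℝ)
    (v : Fin (k + p) → ℝ) :
    (hcat A B).mulVec v =
      A.mulVec (fun j => v (Fin.castAdd p j)) + B.mulVec (fun j => v (Fin.natAdd k j)) := by
  ext i
  simp [hcat, Matrix.mulVec, dotProduct, Fin.sum_univ_add]

/-- Under `[A T + B M, Gᵈ] = [0, T]`, for every `b` with `‖b‖_∞ ≤ 1`,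
taking `x = T b` and `u = M b`, every `d ∈ Z(0,Gᵈ)` gives `A x + B u + d ∈ Z(0,T)`. -/
theorem next_state_in_zonotope_of_concat_eq
    {n m p k : ℕ} (A : Matrix (Fin n) (Fin n) ℝ) (B : Matrix (Fin n) (Fin m) ℝ)
    (Gd : Matrix (Fin n) (Fin p) ℝ) (T : Matrix (Fin n) (Fin k) ℝ)
    (M : Matrix (Fin m) (Fin k) ℝ)
    (hTM : hcat (A * T + B * M) Gd =
      Matrix.submatrix (hcat (0 : Matrix (Fin n) (Fin p) ℝ) T) id (Fin.cast (Nat.add_comm k p))) :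
    ∀ b : Fin k → ℝ, ‖b‖ ≤ 1 →
      ∀ d ∈ zono 0 Gd,
        A.mulVec (T.mulVec b) + B.mulVec (M.mulVec b) + d ∈ zono 0 T := by
  rintro b hb d ⟨e, he, rfl⟩
  have hv : ∀ j, ‖Fin.append b e j‖ ≤ 1 := by
    intro j
    refine Fin.addCases (fun i => ?_) (fun i => ?_) j
    · simpa only [Fin.append_left] using (norm_le_pi_norm b i).trans hb
    · simpa only [Fin.append_right] using (norm_le_pi_norm e i).trans he
  -- The witness consists of the last `k` entries of the stacked vector `(b, e)`.
  refine ⟨fun j => Fin.append b e (Fin.cast (Nat.add_comm p k) (Fin.natAdd p j)),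
    (pi_norm_le_iff_of_nonneg zero_le_one).2 fun j => hv _, ?_⟩
  have hW := congrArg (fun W => W.mulVec (Fin.append b e)) hTM
  -- `submatrix_mulVec_equiv` needs the column reindexing in the form of an equivalence.
  have hcast : (hcat (0 : Matrix (Fin n) (Fin p) ℝ) T).submatrix id
        (Fin.cast (Nat.add_comm k p)) =
      (hcat (0 : Matrix (Fin n) (Fin p) ℝ) T).submatrix id (finCongr (Nat.add_comm k p)) := rfl
  simp only [hcast, Matrix.submatrix_mulVec_equiv, hcat_mulVec, Fin.append_left,
    Fin.append_right, Matrix.zero_mulVec, zero_add, Function.comp_id] at hW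
  rw [zero_add, zero_add, Matrix.mulVec_mulVec, Matrix.mulVec_mulVec, ← Matrix.add_mulVec]
  exact hW
end

section
/- Let A be a real n×n matrix, B a real n×m matrix, and G^d a real n×p matrix. Suppose there exist a real n×k matrix T and a real m×k matrix M such that the horizontal concatenation [A T + B M , G^d] equals [0_{n×p} , T]. Then there exists a feedback map κ : Z(0,T) → Z(0,M) such that for every initial state x₀ ∈ Z(0,T) and every disturbance sequence d : ℕ → Z(0,G^d), the trajectory defined by x(0) = x₀ and x(t+1) = A x(t) + B κ(x(t)) + d(t) satisfies x(t) ∈ Z(0,T) for all t ∈ ℕ. -/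
theorem hcat_mulVec_append {n k p : ℕ} (P : Matrix (Fin n) (Fin k) ℝ)
    (Q : Matrix (Fin n) (Fin p) ℝ) (b : Fin k → ℝ) (w : Fin p → ℝ) :
    (hcat P Q).mulVec (Fin.append b w) = P.mulVec b + Q.mulVec w := by
  ext i
  simp [hcat, Matrix.mulVec, dotProduct, Fin.sum_univ_add]

theorem norm_append_le_one {k p : ℕ} {b : Fin k → ℝ} {w : Fin p → ℝ}
    (hb : ‖b‖ ≤ 1) (hw : ‖w‖ ≤ 1) : ‖Fin.append b w‖ ≤ 1 := by
  refine (pi_norm_le_iff_of_nonneg zero_le_one).2 fun j => ?_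
  refine Fin.addCases (fun i => ?_) (fun i => ?_) j
  · simpa using (norm_le_pi_norm b i).trans hb
  · simpa using (norm_le_pi_norm w i).trans hw

/-- Multiplying by `[0, T]` (its columns indexed by `Fin (k + p)`) keeps only the last `k`
entries of a vector. -/
theorem hcat_zero_cast_mulVec {n k p : ℕ} (T : Matrix (Fin n) (Fin k) ℝ)
    (c : Fin (k + p) → ℝ) :
    (Matrix.submatrix (hcat (0 : Matrix (Fin n) (Fin p) ℝ) T) id
      (Fin.cast (Nat.add_comm k p))).mulVec c =
      T.mulVec fun j => c (Fin.cast (Nat.add_comm p k) (Fin.natAdd p j)) := by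
  ext i
  simp only [Matrix.mulVec, dotProduct]
  rw [← (finCongr (Nat.add_comm p k)).sum_comp, Fin.sum_univ_add]
  simp [hcat]

/-- Under `[A T + B M, Gᵈ] = [0, T]`, there is a feedback map from
`Z(0,T)` into `Z(0,M)` keeping every disturbed trajectory inside `Z(0,T)` forever. -/
theorem exists_zonotope_invariance_controller_of_concat_eq
    {n m p k : ℕ} (A : Matrix (Fin n) (Fin n) ℝ) (B : Matrix (Fin n) (Fin m) ℝ)
    (Gd : Matrix (Fin n) (Fin p) ℝ) (T : Matrix (Fin n) (Fin k) ℝ)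
    (M : Matrix (Fin m) (Fin k) ℝ)
    (hTM : hcat (A * T + B * M) Gd =
      Matrix.submatrix (hcat (0 : Matrix (Fin n) (Fin p) ℝ) T) id (Fin.cast (Nat.add_comm k p))) :
    ∃ κ : (Fin n → ℝ) → (Fin m → ℝ),
      (∀ x ∈ zono 0 T, κ x ∈ zono 0 M) ∧
      ∀ (x : ℕ → Fin n → ℝ) (d : ℕ → Fin n → ℝ),
        x 0 ∈ zono 0 T → (∀ t, d t ∈ zono 0 Gd) →
        (∀ t, x (t + 1) = A.mulVec (x t) + B.mulVec (κ (x t)) + d t) →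
        ∀ t, x t ∈ zono 0 T := by
  classical
  choose! β hβ hxβ using fun (x : Fin n → ℝ) (hx : x ∈ zono 0 T) => hx
  refine ⟨fun x => M.mulVec (β x), fun x hx => ⟨β x, hβ x hx, by simp⟩, ?_⟩
  intro x d h0 hd hstep t
  induction t with
  | zero => exact h0
  | succ t ih =>
    obtain ⟨w, hw, hdw⟩ := hd t
    have hc := norm_append_le_one (hβ _ ih) hw
    refine ⟨_, (pi_norm_le_iff_of_nonneg zero_le_one).2 fun j => (norm_le_pi_norm
      (Fin.append (β (x t)) w) (Fin.cast (Nat.add_comm p k) (Fin.natAdd p j))).trans hc, ?_⟩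
    rw [← hcat_zero_cast_mulVec, ← hTM, hcat_mulVec_append, hstep, hdw]
    -- Only the state fed to `A` is rewritten as `T b`; the one inside the feedback stays.
    have hA : A.mulVec (x t) = A.mulVec (T.mulVec (β (x t))) := by
      conv_lhs => rw [hxβ _ ih, zero_add]
    rw [hA]
    simp [Matrix.add_mulVec, Matrix.mulVec_mulVec]
end
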